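/- Let F be a class of functions X → {0,1} of VC dimension d, let f ∈ F, and let P be a probability distribution on X. Then E_{x̄, z ~ P^n}[ max_{h ∈ VS(x̄, f(x̄))} L_z(VS(x̄, f(x̄)), h) ] ≤ 2d·log₂(2n) / n, where the loss is the 0-1 loss and x̄, z are independent i.i.d. samples of size n from P. -/

import Mathlib

open Finset MeasureTheory

/-- A class `F` of binary classifiers shatters a finite set `S`. -/
def Shatters {X : Type*} (F : Set (X → Bool)) (S : Finset X) : Prop :=
  ∀ b : X → Bool, ∃ g ∈ F, ∀ a ∈ S, g a = b a

/-- The 0-1 loss. -/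
noncomputable def loss01 : Bool → Bool → ℝ := fun y y' => if y = y' then 0 else 1

/-- Version space: classifiers in `F` consistent with the labeled data. -/
def VS {X : Type*} (F : Set (X → Bool)) {n : ℕ} (xb : Fin n → X) (yb : Fin n → Bool) :
    Set (X → Bool) :=
  {g ∈ F | ∀ i, g (xb i) = yb i}

/-- `L_z(V,h) = sup_{g ∈ V} (1/n)·Σ_i ℓ(g(z_i), h(z_i))` with the 0-1 loss. -/
noncomputable def worstLoss01 {X : Type*} {n : ℕ}
    (z : Fin n → X) (V : Set (X → Bool)) (h : X → Bool) : ℝ :=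
  ⨆ g ∈ V, (1 / (n : ℝ)) * ∑ i, loss01 (g (z i)) (h (z i))

/-- Weight of position `i` when the training point is the one with index `b`. -/
def wt {n : ℕ} (r p q : Fin n × Bool → Bool) (i : Fin n) (b : Bool) : ℝ :=
  if p (i, b) = r (i, b) ∧ q (i, b) = r (i, b) then
    (if p (i, !b) = q (i, !b) then 1 else 2) else 0

lemma wt_nonneg {n : ℕ} (r p q : Fin n × Bool → Bool) (i : Fin n) (b : Bool) :
    0 ≤ wt r p q i b := by
  unfold wt; split_ifs <;> norm_num

lemma wt_comm {n : ℕ} (r p q : Fin n × Bool → Bool) (i : Fin n) (b : Bool) :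
    wt r p q i b = wt r q p i b := by
  unfold wt; simp only [and_comm, eq_comm]

lemma wt_sum {n : ℕ} (r p q : Fin n × Bool → Bool) :
    ∑ s : Fin n → Bool, ∏ i, wt r p q i (s i) ≤ 2 ^ n := by
  have h := (Finset.prod_univ_sum (fun _ : Fin n => (Finset.univ : Finset Bool))
    (fun i b => wt r p q i b)).symm
  rw [Fintype.piFinset_univ] at h
  rw [h]
  calc ∏ i : Fin n, ∑ b : Bool, wt r p q i b ≤ ∏ i : Fin n, (2 : ℝ) := by
        apply Finset.prod_le_prod
        · intro i _
          exact Finset.sum_nonneg fun b _ => wt_nonneg r p q i b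
        · intro i _
          simp only [Fintype.sum_bool, wt, Bool.not_true, Bool.not_false]
          split_ifs <;> first | (norm_num; done) | (exfalso; grind)
    _ = 2 ^ n := by simp

lemma choose_sum_le (m d : ℕ) (hd : 1 ≤ d) :
    ∑ k ∈ Finset.Iic d, m.choose k ≤ m ^ d + 1 := by
  have e : ∀ d, Finset.Iic d = Finset.range (d + 1) := by
    intro d; ext; simp
  rw [e]
  induction d, hd using Nat.le_induction with
  | base => simp [Finset.sum_range_succ]; omega
  | succ d hd ih =>
    rw [Finset.sum_range_succ]
    have h : m.choose (d + 1) + m ^ d ≤ m ^ (d + 1) := by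
      rcases m with _ | m
      · simp; omega
      have h1 : (m + 1).choose (d + 1) ≤ (m + 1) * m ^ d := by
        have h2 := Nat.add_one_mul_choose_eq m d
        have h3 : m.choose d ≤ m ^ d := Nat.choose_le_pow m d
        nlinarith [Nat.zero_le ((m + 1).choose (d + 1) * d), Nat.mul_le_mul_left (m + 1) h3]
      have h4 : (m + 1) * m ^ d ≤ (m + 1) ^ d * m := by
        obtain ⟨e, rfl⟩ := Nat.exists_eq_add_of_le hd
        have : m ^ e ≤ (m + 1) ^ e := Nat.pow_le_pow_left (by omega) e
        calc (m + 1) * m ^ (1 + e) = (m + 1) * m * m ^ e := by ring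
          _ ≤ (m + 1) * m * (m + 1) ^ e := Nat.mul_le_mul_left _ this
          _ = _ := by ring
      calc _ ≤ (m + 1) ^ d * m + (m + 1) ^ d := by omega
        _ = _ := by ring
    omega

/-- The set of patterns of `F` on a finite family of points. -/
noncomputable def pats {X ι : Type*} [Fintype ι] (F : Set (X → Bool)) (pt : ι → X) :
    Finset (ι → Bool) :=
  (Set.toFinite ((fun g : X → Bool => g ∘ pt) '' F)).toFinset

lemma mem_pats {X ι : Type*} [Fintype ι] (F : Set (X → Bool)) (pt : ι → X) (p : ι → Bool) :
    p ∈ pats F pt ↔ ∃ g ∈ F, g ∘ pt = p := by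
  simp [pats]

lemma pats_card {X ι : Type*} [Fintype ι] (F : Set (X → Bool)) (pt : ι → X) (d : ℕ)
    (hVC : ∀ S : Finset X, _root_.Shatters F S → S.card ≤ d) :
    (pats F pt).card ≤ ∑ k ∈ Finset.Iic d, (Fintype.card ι).choose k := by
  classical
  let φ : (ι → Bool) → Finset ι := fun p => Finset.univ.filter fun i => p i = true
  have hφ : Function.Injective φ := by
    intro p q h
    funext i
    have := congrArg (fun s => i ∈ s) h
    simp only [φ, Finset.mem_filter, Finset.mem_univ, true_and, eq_iff_iff] at this
    exact Bool.eq_iff_iff.mpr this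
  set A := (pats F pt).image φ with hA
  have hc : A.card = (pats F pt).card := Finset.card_image_of_injective _ hφ
  have hs : ∀ s, Finset.Shatters A s → s.card ≤ d := by
    intro s hs
    have key : ∀ t ⊆ s, ∃ g ∈ F, ∀ a ∈ s, (g (pt a) = true ↔ a ∈ t) := by
      intro t ht
      obtain ⟨u, hu, hut⟩ := hs ht
      rw [hA, Finset.mem_image] at hu
      obtain ⟨p, hp, rfl⟩ := hu
      obtain ⟨g, hg, rfl⟩ := (mem_pats F pt p).1 hp
      refine ⟨g, hg, fun a ha => ?_⟩
      rw [← hut]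
      simp [φ, ha]
    have hinj : Set.InjOn pt s := by
      intro a ha b hb hab
      obtain ⟨g, -, h⟩ := key {a} (by simpa using ha)
      have h1 := h a ha
      have h2 := h b hb
      rw [hab] at h1
      have := h2.1 (h1.2 (by simp))
      exact (Finset.mem_singleton.1 this).symm
    rw [← Finset.card_image_of_injOn hinj]
    apply hVC
    intro b
    obtain ⟨g, hg, h⟩ := key (s.filter fun a => b (pt a) = true) (Finset.filter_subset _ _)
    refine ⟨g, hg, fun x hx => ?_⟩
    obtain ⟨a, ha, rfl⟩ := Finset.mem_image.1 hx
    have := h a ha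
    simp only [Finset.mem_filter, ha, true_and] at this
    exact Bool.eq_iff_iff.mpr this
  have hv : A.vcDim ≤ d := by
    apply Finset.sup_le
    intro s h
    exact hs s (Finset.mem_shatterer.1 h)
  rw [← hc]
  refine (Finset.card_le_card_shatterer A).trans (Finset.card_shatterer_le_sum_vcDim.trans ?_)
  exact Finset.sum_le_sum_of_subset (Finset.Iic_subset_Iic.2 hv)

lemma count_bound (N n d : ℕ) (hn : 0 < n) (hN : N ≤ ∑ k ∈ Finset.Iic d, (2 * n).choose k) :
    1 + (1 / 2 : ℝ) * ((N * N - N : ℕ) : ℝ) ≤ (2 * n : ℝ) ^ (2 * d) := by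
  have hNN : N ≤ N * N := Nat.le_mul_self N
  rw [Nat.cast_sub hNN]
  push_cast
  rcases Nat.eq_zero_or_pos d with rfl | hd
  · have e : Finset.Iic 0 = ({0} : Finset ℕ) := by ext; simp
    rw [e] at hN
    simp at hN
    interval_cases N <;> norm_num
  · have h := hN.trans (choose_sum_le _ d hd)
    have hA : 2 ≤ (2 * n) ^ d := by
      calc 2 ≤ 2 * n := by omega
        _ ≤ (2 * n) ^ d := Nat.le_self_pow (by omega) _
    have h' : (N : ℝ) ≤ (2 * n : ℝ) ^ d + 1 := by exact_mod_cast h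
    have hA' : (2 : ℝ) ≤ (2 * n : ℝ) ^ d := by exact_mod_cast hA
    rw [mul_comm 2 d, pow_mul]
    generalize (2 * n : ℝ) ^ d = a at *
    rcases Nat.eq_zero_or_pos N with rfl | hp
    · simp only [Nat.cast_zero]; nlinarith
    have : (1 : ℝ) ≤ N := by exact_mod_cast hp
    nlinarith [mul_le_mul h' (sub_le_sub_right h' 1) (by linarith) (by linarith)]

/-- The random variable of the theorem, on paired samples. -/
noncomputable def Phi {X : Type*} (F : Set (X → Bool)) (f : X → Bool) {n : ℕ}
    (p : (Fin n → X) × (Fin n → X)) : ℝ :=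
  ⨆ h ∈ VS F p.1 fun i => f (p.1 i), worstLoss01 p.2 (VS F p.1 fun i => f (p.1 i)) h

lemma Phi_le {X : Type*} (F : Set (X → Bool)) (f : X → Bool) {n : ℕ}
    (p : (Fin n → X) × (Fin n → X)) (C : ℝ) (hC : 0 ≤ C)
    (h : ∀ g ∈ F, ∀ h ∈ F, (∀ i, g (p.1 i) = f (p.1 i)) → (∀ i, h (p.1 i) = f (p.1 i)) →
      (1 / (n : ℝ)) * ∑ i, loss01 (g (p.2 i)) (h (p.2 i)) ≤ C) : Phi F f p ≤ C := by
  refine Real.iSup_le (fun k => Real.iSup_le (fun hk => ?_) hC) hC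
  refine Real.iSup_le (fun g => Real.iSup_le (fun hg => ?_) hC) hC
  exact h g hg.1 k hk.1 hg.2 hk.2

lemma Phi_nonneg {X : Type*} (F : Set (X → Bool)) (f : X → Bool) {n : ℕ}
    (p : (Fin n → X) × (Fin n → X)) : 0 ≤ Phi F f p := by
  refine Real.iSup_nonneg fun k => Real.iSup_nonneg fun _ => Real.iSup_nonneg fun g =>
    Real.iSup_nonneg fun _ => mul_nonneg (by positivity) (Finset.sum_nonneg fun i _ => ?_)
  unfold loss01; split_ifs <;> norm_num

lemma Phi_le_one {X : Type*} (F : Set (X → Bool)) (f : X → Bool) {n : ℕ}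
    (p : (Fin n → X) × (Fin n → X)) : Phi F f p ≤ 1 := by
  refine Phi_le F f p 1 zero_le_one fun g _ h _ _ _ => ?_
  have : ∑ i, loss01 (g (p.2 i)) (h (p.2 i)) ≤ ∑ i : Fin n, (1 : ℝ) := by
    apply Finset.sum_le_sum
    intro i _
    unfold loss01; split_ifs <;> norm_num
  simp only [Finset.sum_const, Finset.card_univ, Fintype.card_fin, nsmul_eq_mul, mul_one] at this
  rw [one_div, inv_mul_eq_div]
  exact div_le_one_of_le₀ this (by positivity)

/-- Swap the coordinates according to `s`. -/
def sw {X : Type*} {n : ℕ} (s : Fin n → Bool) (w : Fin n → X × X) : Fin n → X × X :=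
  fun i => if s i then (w i).swap else w i

def spl {X : Type*} {n : ℕ} (w : Fin n → X × X) : (Fin n → X) × (Fin n → X) :=
  (fun i => (w i).1, fun i => (w i).2)

lemma Phi_avg {X : Type*} (F : Set (X → Bool)) (d : ℕ)
    (hVC : ∀ S : Finset X, _root_.Shatters F S → S.card ≤ d)
    (f : X → Bool) {n : ℕ} (hn : 0 < n) (w : Fin n → X × X) :
    ∑ s : Fin n → Bool, Phi F f (spl (sw s w)) ≤
      2 ^ n * (2 * (d : ℝ) * Real.logb 2 (2 * n) / n) := by
  classical
  let pt : Fin n × Bool → X := fun a => if a.2 then (w a.1).2 else (w a.1).1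
  let A := pats F pt
  let K : (Fin n → Bool) → ℝ := fun s =>
    1 + (1 / 2 : ℝ) * ∑ a ∈ A.offDiag, ∏ i, wt (f ∘ pt) a.1 a.2 i (s i)
  have hterm : ∀ (s : Fin n → Bool) (a : (Fin n × Bool → Bool) × (Fin n × Bool → Bool)), 0 ≤ ∏ i, wt (f ∘ pt) a.1 a.2 i (s i) := fun s a =>
    Finset.prod_nonneg fun i _ => wt_nonneg _ _ _ _ _
  have hK1 : ∀ s, 1 ≤ K s := fun s => by
    have := Finset.sum_nonneg fun a (_ : a ∈ A.offDiag) => hterm s a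
    simp only [K]; linarith
  have hn' : (0 : ℝ) < n := by exact_mod_cast hn
  set B : ℝ := (2 * n : ℝ) ^ (2 * d) with hB
  have hB0 : 0 < B := by positivity
  have hpt1 : ∀ s i, (spl (sw s w)).1 i = pt (i, s i) := by
    intro s i; simp only [spl, sw, pt]; cases s i <;> simp
  have hpt2 : ∀ s i, (spl (sw s w)).2 i = pt (i, !s i) := by
    intro s i; simp only [spl, sw, pt]; cases s i <;> simp
  have hsum : ∑ s, K s ≤ 2 ^ n * B := by
    simp only [K, Finset.sum_add_distrib, ← Finset.mul_sum]
    rw [Finset.sum_comm]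
    have h1 : ∑ a ∈ A.offDiag, ∑ s : Fin n → Bool, ∏ i, wt (f ∘ pt) a.1 a.2 i (s i) ≤
        ∑ a ∈ A.offDiag, (2 : ℝ) ^ n := Finset.sum_le_sum fun a _ => wt_sum _ _ _
    have hc := pats_card F pt d hVC
    simp only [Fintype.card_prod, Fintype.card_fin, Fintype.card_bool] at hc
    rw [mul_comm n 2] at hc
    have h2 := count_bound _ n d hn hc
    simp only [Finset.sum_const, Finset.offDiag_card, nsmul_eq_mul] at h1
    have h3 : (0 : ℝ) < 2 ^ n := by positivity
    have h4 := mul_le_mul_of_nonneg_left h2 h3.le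
    have h5 : ∑ _s : Fin n → Bool, (1 : ℝ) = 2 ^ n := by simp
    rw [h5]
    simp only [A] at h1 ⊢
    linarith
  have hPhi : ∀ s, Phi F f (spl (sw s w)) ≤ (1 / n) * Real.logb 2 (K s) := by
    intro s
    apply Phi_le
    · exact mul_nonneg (by positivity) (Real.logb_nonneg (by norm_num) (hK1 s))
    intro g hg h hh hgf hhf
    apply mul_le_mul_of_nonneg_left _ (by positivity)
    rw [Real.le_logb_iff_rpow_le (by norm_num) (by linarith [hK1 s])]
    simp only [hpt1, hpt2] at *
    rw [Real.rpow_sum_of_pos (by norm_num)]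
    have hW : ∏ i, (2 : ℝ) ^ loss01 (g (pt (i, !s i))) (h (pt (i, !s i))) =
        ∏ i, wt (f ∘ pt) (g ∘ pt) (h ∘ pt) i (s i) := by
      apply Finset.prod_congr rfl
      intro i _
      simp only [wt, Function.comp, hgf, hhf, loss01]
      split_ifs <;> simp_all
    by_cases hgh : g ∘ pt = h ∘ pt
    · refine le_trans (le_of_eq ?_) (hK1 s)
      apply Finset.prod_eq_one
      intro i _
      have := congrFun hgh (i, !s i)
      simp only [Function.comp] at this
      simp [loss01, this]
    · rw [hW]
      have hgA : g ∘ pt ∈ A := (mem_pats _ _ _).2 ⟨g, hg, rfl⟩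
      have hhA : h ∘ pt ∈ A := (mem_pats _ _ _).2 ⟨h, hh, rfl⟩
      have hsub : ({(g ∘ pt, h ∘ pt), (h ∘ pt, g ∘ pt)} : Finset _) ⊆ A.offDiag := by
        intro a ha
        simp only [Finset.mem_insert, Finset.mem_singleton] at ha
        rcases ha with rfl | rfl
        · exact Finset.mem_offDiag.2 ⟨hgA, hhA, hgh⟩
        · exact Finset.mem_offDiag.2 ⟨hhA, hgA, fun e => hgh e.symm⟩
      have := Finset.sum_le_sum_of_subset_of_nonneg hsub
        (f := fun a => ∏ i, wt (f ∘ pt) a.1 a.2 i (s i)) (fun a _ _ => hterm s a)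
      rw [Finset.sum_pair (by intro e; exact hgh (congrArg Prod.fst e))] at this
      simp only [wt_comm (f ∘ pt) (h ∘ pt) (g ∘ pt)] at this
      simp only [K]
      linarith
  have hlog : ∀ s, Real.logb 2 (K s) ≤ Real.logb 2 B + (K s / B - 1) / Real.log 2 := by
    intro s
    have hk : 0 < K s := by linarith [hK1 s]
    have h2 : 0 < Real.log 2 := Real.log_pos (by norm_num)
    have := Real.log_le_sub_one_of_pos (div_pos hk hB0)
    rw [Real.log_div hk.ne' hB0.ne'] at this
    rw [Real.logb, Real.logb, ← add_div]
    gcongr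
    linarith
  have hcard : ∑ _s : Fin n → Bool, (1 : ℝ) = 2 ^ n := by simp
  have hLB : Real.logb 2 B = 2 * d * Real.logb 2 (2 * n) := by
    rw [hB, Real.logb_pow]; push_cast; ring
  have htot : ∑ s, Real.logb 2 (K s) ≤ 2 ^ n * Real.logb 2 B := by
    have h2 : 0 < Real.log 2 := Real.log_pos (by norm_num)
    calc ∑ s, Real.logb 2 (K s)
        ≤ ∑ s, (Real.logb 2 B * 1 + (K s / B - 1) / Real.log 2) := by
          apply Finset.sum_le_sum; intro s _; rw [mul_one]; exact hlog s
      _ = Real.logb 2 B * 2 ^ n + ((∑ s, K s) / B - 2 ^ n) / Real.log 2 := by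
          rw [Finset.sum_add_distrib, ← Finset.mul_sum, hcard, ← Finset.sum_div,
            Finset.sum_sub_distrib, hcard, ← Finset.sum_div]
      _ ≤ Real.logb 2 B * 2 ^ n + 0 := by
          gcongr
          apply div_nonpos_of_nonpos_of_nonneg _ h2.le
          rw [sub_nonpos, div_le_iff₀ hB0]; exact hsum
      _ = _ := by ring
  calc ∑ s : Fin n → Bool, Phi F f (spl (sw s w))
      ≤ ∑ s, (1 / n) * Real.logb 2 (K s) := Finset.sum_le_sum fun s _ => hPhi s
    _ = (1 / n) * ∑ s, Real.logb 2 (K s) := by rw [Finset.mul_sum]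
    _ ≤ (1 / n) * (2 ^ n * Real.logb 2 B) := by gcongr
    _ = _ := by rw [hLB]; ring

theorem stmt_6 {X : Type*} [Countable X] [MeasurableSpace X] [DiscreteMeasurableSpace X]
    (F : Set (X → Bool)) (d : ℕ)
    (hVC : ∀ S : Finset X, Shatters F S → S.card ≤ d)
    (f : X → Bool) (hf : f ∈ F)
    (P : PMF X) {n : ℕ} (hn : 0 < n) :
    (∫ p : (Fin n → X) × (Fin n → X),
        (⨆ h ∈ VS F p.1 fun i => f (p.1 i),
          worstLoss01 p.2 (VS F p.1 fun i => f (p.1 i)) h)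
        ∂((Measure.pi fun _ : Fin n => P.toMeasure).prod
            (Measure.pi fun _ : Fin n => P.toMeasure))) ≤
      2 * (d : ℝ) * Real.logb 2 (2 * n) / n := by
  change ∫ p, Phi F f p ∂_ ≤ _
  have hmp := measurePreserving_arrowProdEquivProdArrow X X (Fin n)
    (fun _ => P.toMeasure) (fun _ => P.toMeasure)
  rw [← hmp.integral_comp' (Phi F f)]
  change ∫ w, Phi F f (spl w) ∂_ ≤ _
  set μ := Measure.pi fun _ : Fin n => P.toMeasure.prod P.toMeasure with hμ
  have hsw : ∀ s : Fin n → Bool, MeasurePreserving (sw s) μ μ := by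
    intro s
    refine measurePreserving_pi (fun _ : Fin n => P.toMeasure.prod P.toMeasure)
      (fun _ : Fin n => P.toMeasure.prod P.toMeasure)
      (f := fun i (a : X × X) => if s i then a.swap else a) ?_
    intro i
    cases s i
    · simp only [Bool.false_eq_true, if_false]
      exact MeasurePreserving.id _
    · simpa using Measure.measurePreserving_swap
  have hm : Measurable fun w : Fin n → X × X => Phi F f (spl w) := Measurable.of_discrete
  have hint : Integrable (fun w => Phi F f (spl w)) μ := by
    apply Integrable.of_bound hm.aestronglyMeasurable 1
    refine Filter.Eventually.of_forall fun w => ?_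
    rw [Real.norm_of_nonneg (Phi_nonneg F f _)]
    exact Phi_le_one F f _
  have hinv : ∀ s, ∫ w, Phi F f (spl (sw s w)) ∂μ = ∫ w, Phi F f (spl w) ∂μ := by
    intro s
    rw [← (hsw s).map_eq]
    conv_lhs => rw [(hsw s).map_eq]
    exact (integral_map (hsw s).measurable.aemeasurable hm.aestronglyMeasurable).symm
  have hints : ∀ s, Integrable (fun w => Phi F f (spl (sw s w))) μ := fun s =>
    (hsw s).integrable_comp_of_integrable hint
  have h1 : ∫ w, ∑ s : Fin n → Bool, Phi F f (spl (sw s w)) ∂μ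
      = 2 ^ n * ∫ w, Phi F f (spl w) ∂μ := by
    rw [integral_finsetSum _ fun s _ => hints s]
    simp [hinv]
  have h2 : ∫ w, ∑ s : Fin n → Bool, Phi F f (spl (sw s w)) ∂μ ≤
      ∫ w, 2 ^ n * (2 * (d : ℝ) * Real.logb 2 (2 * n) / n) ∂μ := by
    apply integral_mono (integrable_finsetSum _ fun s _ => hints s) (integrable_const _)
    intro w
    exact Phi_avg F d hVC f hn w
  rw [h1] at h2
  simp only [integral_const, probReal_univ, one_smul] at h2
  exact le_of_mul_le_mul_left h2 (by positivity)
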